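/- The first values of the complexity function are: C(L) = (#A_0 − 1)·L + 1 for all 0 ≤ L ≤ |p_0|, and C(|p_0| + 1) = (#A_0 − 1)·(|p_0| + 1) + 𝟙_{A_1}(a_0). -/

import Mathlib

/-!
Put `m = |p 0| = n 0 - 1`. Every block `p k` is a copy of `p 0 c₁ p 0 c₂ ⋯ p 0` with separators
`cᵢ ∈ A 1`; equivalently, the letter in position `i` (counted from `0`) is `a 0` unless `m + 1`
divides `i + 1`, in which case it lies in `A 1` (`aligned_block`). Conversely, `p 0 c p 0` occurs for
every `c ∈ A 1`, because each block begins and ends with `p 0` (`infix_block`).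

A word of length `L ≤ m + 1` meets at most one separator, and meets exactly one when `L = m + 1`.
So the words of length `L` in the language are the words `a 0 ^ i c a 0 ^ (L - 1 - i)` with `c ∈ A 1`,
`i < L`, together with `a 0 ^ L` when `L ≤ m` (`mem_lang_iff`). Such a word with `c ≠ a 0`
determines `i` and `c`, and the remaining ones all equal `a 0 ^ L`. As `A 1 \ {a 0} = A 0 \ {a 0}`,
this gives `(#A 0 - 1) * L` words, plus one more if `L ≤ m` or `a 0 ∈ A 1` (`cmpl_eq`).
-/

open Filter

/-- The blocks `p k` of the simple Toeplitz subshift coded by `a` and `n`: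
`p 0 = a 0 ^ (n 0 - 1)` and `p (k+1)` consists of `n (k+1)` copies of `p k`
separated by `n (k+1) - 1` single letters `a (k+1)`. -/
def ToeplitzBlock {A : Type*} (a : ℕ → A) (n : ℕ → ℕ) : ℕ → List A
  | 0 => List.replicate (n 0 - 1) (a 0)
  | k + 1 => List.intercalate [a (k + 1)] (List.replicate (n (k + 1)) (ToeplitzBlock a n k))

/-- `lenPrev a n k = |p (k-1)|`, with the convention `|p (-1)| = 0`. -/
def lenPrev {A : Type*} (a : ℕ → A) (n : ℕ → ℕ) : ℕ → ℕ
  | 0 => 0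
  | k + 1 => (ToeplitzBlock a n k).length

/-- The language of the simple Toeplitz subshift: all finite words occurring as a
factor of some block `p k`. -/
def ToeplitzLang {A : Type*} (a : ℕ → A) (n : ℕ → ℕ) : Set (List A) :=
  {u | ∃ k, u <:+: ToeplitzBlock a n k}

/-- The complexity function `C L`. -/
noncomputable def cmpl {A : Type*} (a : ℕ → A) (n : ℕ → ℕ) (L : ℕ) : ℕ :=
  Set.ncard {u | u ∈ ToeplitzLang a n ∧ u.length = L}

/-- The palindrome complexity function `P L`. -/
noncomputable def palCmpl {A : Type*} (a : ℕ → A) (n : ℕ → ℕ) (L : ℕ) : ℕ :=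
  Set.ncard {u | u ∈ ToeplitzLang a n ∧ u.length = L ∧ u.reverse = u}

/-- `Ak a k = {a j : j ≥ k}`. -/
def Ak {A : Type*} (a : ℕ → A) (k : ℕ) : Set A := {x | ∃ j, k ≤ j ∧ a j = x}

/-- The eventual alphabet `A_ev = ⋂ k, A_k`. -/
def Aev {A : Type*} (a : ℕ → A) : Set A := ⋂ k, Ak a k

/-- `Kf a k = min {j > k : {a (k+1), …, a j} = A (k+1)}`. -/
noncomputable def Kf {A : Type*} (a : ℕ → A) (k : ℕ) : ℕ :=
  sInf {j | k < j ∧ {x | ∃ i, k + 1 ≤ i ∧ i ≤ j ∧ a i = x} = Ak a (k + 1)}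

/-- The positions `m i` at which `Kf` increases: `m 0 = 0` and
`m (i+1) = min {j > m i : Kf j > Kf (m i)}`. -/
noncomputable def mseq {A : Type*} (a : ℕ → A) : ℕ → ℕ
  | 0 => 0
  | i + 1 => sInf {j | mseq a i < j ∧ Kf a (mseq a i) < Kf a j}

/-- The repetitivity function `R L`: the least `L'` such that every word of
length `L` of the language is a factor of every word of length `L'`. -/
noncomputable def repet {A : Type*} (a : ℕ → A) (n : ℕ → ℕ) (L : ℕ) : ℕ :=
  sInf {L' | ∀ u ∈ ToeplitzLang a n, u.length = L →
    ∀ w ∈ ToeplitzLang a n, w.length = L' → u <:+: w}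

/-! ### The positions of the separators in a block -/

/-- The word `w` has the shape `x^m c₁ x^m c₂ ⋯ x^m` with all separators `cᵢ` in `S`,
expressed position by position. -/
def Aligned {A : Type*} (m : ℕ) (x : A) (S : Set A) (w : List A) : Prop :=
  (m + 1) ∣ w.length + 1 ∧ ∀ i y, w[i]? = some y →
    (¬ (m + 1) ∣ i + 1 → y = x) ∧ ((m + 1) ∣ i + 1 → y ∈ S)

lemma Aligned.append_cons {A : Type*} {m : ℕ} {x : A} {S : Set A} {v w : List A} {c : A}
    (hv : Aligned m x S v) (hw : Aligned m x S w) (hc : c ∈ S) :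
    Aligned m x S (v ++ c :: w) := by
  refine ⟨?_, ?_⟩
  · have : (v ++ c :: w).length + 1 = (v.length + 1) + (w.length + 1) := by simp; omega
    rw [this]
    exact dvd_add hv.1 hw.1
  · intro i y hy
    rcases lt_trichotomy i v.length with h | h | h
    · rw [List.getElem?_append_left h] at hy
      exact hv.2 i y hy
    · subst h
      simp at hy
      subst hy
      exact ⟨fun h => absurd hv.1 h, fun _ => hc⟩
    · obtain ⟨j, rfl⟩ : ∃ j, i = v.length + 1 + j := ⟨i - (v.length + 1), by omega⟩
      rw [List.getElem?_append_right (by omega)] at hy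
      have e : v.length + 1 + j - v.length = j + 1 := by omega
      rw [e, List.getElem?_cons_succ] at hy
      have e2 : v.length + 1 + j + 1 = (v.length + 1) + (j + 1) := by omega
      rw [e2, Nat.dvd_add_right hv.1]
      exact hw.2 j y hy

lemma intercalate_replicate_succ {A : Type*} (c : A) (p : List A) (N : ℕ) :
    List.intercalate [c] (List.replicate (N + 2) p) =
      p ++ c :: List.intercalate [c] (List.replicate (N + 1) p) := by
  simp [List.intercalate, List.replicate_succ]

lemma aligned_block {A : Type*} (a : ℕ → A) (n : ℕ → ℕ) (hn : ∀ k, 2 ≤ n k) (k : ℕ) :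
    Aligned (n 0 - 1) (a 0) (Ak a 1) (ToeplitzBlock a n k) := by
  induction k with
  | zero =>
    refine ⟨by simp [ToeplitzBlock], ?_⟩
    intro i y hy
    simp only [ToeplitzBlock, List.getElem?_replicate] at hy
    split_ifs at hy with h
    simp only [Option.some.injEq] at hy
    refine ⟨fun _ => hy.symm, fun hd => ?_⟩
    have := Nat.le_of_dvd (by omega) hd
    omega
  | succ k ih =>
    rw [ToeplitzBlock]
    obtain ⟨N, hN⟩ : ∃ N, n (k + 1) = N + 1 := ⟨n (k + 1) - 1, by have := hn (k + 1); omega⟩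
    rw [hN]
    clear hN
    induction N with
    | zero => simpa [List.intercalate] using ih
    | succ N ihN =>
      rw [intercalate_replicate_succ]
      exact ih.append_cons ihN ⟨k + 1, by omega, rfl⟩

/-! ### Occurrences of `p 0 c p 0` -/

lemma suffix_intercalate {A : Type*} (c : A) (p : List A) (N : ℕ) :
    p <:+ List.intercalate [c] (List.replicate (N + 1) p) := by
  induction N with
  | zero => simp [List.intercalate]
  | succ N ih =>
    rw [intercalate_replicate_succ]
    exact (ih.trans (List.suffix_cons _ _)).trans (List.suffix_append _ _)

lemma prefix_intercalate {A : Type*} (c : A) (p : List A) (N : ℕ) :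
    p <+: List.intercalate [c] (List.replicate (N + 1) p) := by
  cases N with
  | zero => simp [List.intercalate]
  | succ N =>
    rw [intercalate_replicate_succ]
    exact List.prefix_append _ _

lemma block_zero_prefix_suffix {A : Type*} (a : ℕ → A) (n : ℕ → ℕ) (hn : ∀ k, 2 ≤ n k) (k : ℕ) :
    ToeplitzBlock a n 0 <+: ToeplitzBlock a n k ∧ ToeplitzBlock a n 0 <:+ ToeplitzBlock a n k := by
  induction k with
  | zero => exact ⟨List.prefix_rfl, List.suffix_rfl⟩
  | succ k ih =>
    obtain ⟨N, hN⟩ : ∃ N, n (k + 1) = N + 1 := ⟨n (k + 1) - 1, by have := hn (k + 1); omega⟩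
    rw [ToeplitzBlock.eq_2, hN]
    exact ⟨ih.1.trans (prefix_intercalate _ _ _), ih.2.trans (suffix_intercalate _ _ _)⟩

lemma infix_block {A : Type*} (a : ℕ → A) (n : ℕ → ℕ) (hn : ∀ k, 2 ≤ n k) (k : ℕ) :
    ToeplitzBlock a n 0 ++ a (k + 1) :: ToeplitzBlock a n 0 <:+: ToeplitzBlock a n (k + 1) := by
  obtain ⟨N, hN⟩ : ∃ N, n (k + 1) = N + 2 := ⟨n (k + 1) - 2, by have := hn (k + 1); omega⟩
  rw [ToeplitzBlock.eq_2 a n k, hN, intercalate_replicate_succ]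
  obtain ⟨s, hs⟩ := (block_zero_prefix_suffix a n hn k).2
  obtain ⟨t, ht⟩ :=
    (block_zero_prefix_suffix a n hn k).1.trans (prefix_intercalate (a (k + 1)) _ N)
  refine ⟨s, t, ?_⟩
  rw [← ht]
  rw [← hs]
  simp

lemma set_replicate_infix {A : Type*} (x c : A) {m L i : ℕ} (hi : i < L) (hL : L ≤ m + 1) :
    (List.replicate L x).set i c <:+: List.replicate m x ++ c :: List.replicate m x := by
  rw [List.set_eq_take_append_cons_drop, if_pos (by simpa using hi), List.take_replicate,
    List.drop_replicate]
  refine ⟨List.replicate (m - i) x, List.replicate (m - (L - (i + 1))) x, ?_⟩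
  have e1 : m = (m - i) + min i L := by omega
  have e2 : m = (L - (i + 1)) + (m - (L - (i + 1))) := by omega
  have h1 : List.replicate m x = List.replicate (m - i) x ++ List.replicate (min i L) x := by
    rw [← List.replicate_add, ← e1]
  have h2 : List.replicate m x =
      List.replicate (L - (i + 1)) x ++ List.replicate (m - (L - (i + 1))) x := by
    rw [← List.replicate_add, ← e2]
  calc _ = (List.replicate (m - i) x ++ List.replicate (min i L) x) ++
        c :: (List.replicate (L - (i + 1)) x ++ List.replicate (m - (L - (i + 1))) x) := by
          simp only [List.append_assoc, List.cons_append]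
    _ = _ := by rw [← h1, ← h2]

/-! ### Short words of the language -/

lemma Aligned.infix_cases {A : Type*} {m : ℕ} {x : A} {S : Set A} {w u : List A}
    (hw : Aligned m x S w) (hu : u <:+: w) (hL : u.length ≤ m + 1) :
    (u.length ≤ m ∧ u = List.replicate u.length x) ∨
      ∃ i < u.length, ∃ c ∈ S, u = (List.replicate u.length x).set i c := by
  obtain ⟨s, t, rfl⟩ := hu
  have key : ∀ j (hj : j < u.length), (¬ (m + 1) ∣ s.length + j + 1 → u[j] = x) ∧
      ((m + 1) ∣ s.length + j + 1 → u[j] ∈ S) := by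
    intro j hj
    apply hw.2 (s.length + j)
    rw [List.append_assoc, List.getElem?_append_right (by omega), Nat.add_sub_cancel_left,
      List.getElem?_append_left hj, List.getElem?_eq_getElem hj]
  by_cases h : ∃ i < u.length, (m + 1) ∣ s.length + i + 1
  · obtain ⟨i, hi, hd⟩ := h
    refine Or.inr ⟨i, hi, u[i], (key i hi).2 hd, ?_⟩
    refine List.ext_getElem (by simp) fun j hj _ => ?_
    rw [List.getElem_set]
    split_ifs with hij
    · subst hij; rfl
    · rw [List.getElem_replicate]
      refine (key j hj).1 fun hdj => ?_
      -- two separators are at least `m + 1` apart, so they do not both fit into `u`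
      have h1 : ((m + 1 : ℕ) : ℤ) ∣ (i : ℤ) - j := by
        have e : (i : ℤ) - j = ((s.length + i + 1 : ℕ) : ℤ) - ((s.length + j + 1 : ℕ) : ℤ) := by
          push_cast
          ring
        rw [e]
        exact dvd_sub (Int.natCast_dvd_natCast.2 hd) (Int.natCast_dvd_natCast.2 hdj)
      have := Int.eq_zero_of_abs_lt_dvd h1 (by rw [abs_lt]; omega)
      omega
  · push Not at h
    refine Or.inl ⟨?_, ?_⟩
    · by_contra hlt
      -- a window of length `m + 1` contains a multiple of `m + 1`
      have hr : s.length % (m + 1) < m + 1 := Nat.mod_lt _ (Nat.succ_pos m)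
      refine h (m - s.length % (m + 1)) (by omega) ⟨s.length / (m + 1) + 1, ?_⟩
      have := Nat.div_add_mod s.length (m + 1)
      rw [Nat.mul_add]
      omega
    · refine List.ext_getElem (by simp) fun j hj _ => ?_
      rw [List.getElem_replicate]
      exact (key j hj).1 (h j hj)

lemma mem_lang_iff {A : Type*} (a : ℕ → A) (n : ℕ → ℕ) (hn : ∀ k, 2 ≤ n k) {L : ℕ}
    (hL : L ≤ n 0 - 1 + 1) (u : List A) :
    (u ∈ ToeplitzLang a n ∧ u.length = L) ↔
      (L ≤ n 0 - 1 ∧ u = List.replicate L (a 0)) ∨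
        ∃ i < L, ∃ c ∈ Ak a 1, u = (List.replicate L (a 0)).set i c := by
  constructor
  · rintro ⟨⟨k, hk⟩, rfl⟩
    exact (aligned_block a n hn k).infix_cases hk hL
  · rintro (⟨h, rfl⟩ | ⟨i, hi, c, ⟨j, hj, rfl⟩, rfl⟩)
    · refine ⟨⟨0, List.IsPrefix.isInfix ⟨List.replicate (n 0 - 1 - L) (a 0), ?_⟩⟩, by simp⟩
      rw [← List.replicate_add, ToeplitzBlock]
      congr 1
      omega
    · refine ⟨⟨j, ?_⟩, by simp⟩
      obtain ⟨k, rfl⟩ : ∃ k, j = k + 1 := ⟨j - 1, by omega⟩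
      exact (set_replicate_infix (a 0) (a (k + 1)) hi hL).trans (infix_block a n hn k)

/-! ### Counting -/

lemma mem_Ak_zero_iff {A : Type*} (a : ℕ → A) (c : A) : c ∈ Ak a 0 ↔ c = a 0 ∨ c ∈ Ak a 1 := by
  constructor
  · rintro ⟨j, -, rfl⟩
    rcases Nat.eq_zero_or_pos j with rfl | h
    · exact Or.inl rfl
    · exact Or.inr ⟨j, h, rfl⟩
  · rintro (rfl | ⟨j, -, rfl⟩)
    · exact ⟨0, le_rfl, rfl⟩
    · exact ⟨j, Nat.zero_le _, rfl⟩

/-- A word of length `L` over `x` with one letter replaced by some `c ∈ S`, so `c ≠ x`, determines both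
the place of the replacement and `c`, so there are `L * #S` of them. -/
lemma ncard_set_replicate {A : Type*} [Finite A] (x : A) (S : Set A) (hS : x ∉ S) (L : ℕ) :
    {u : List A | ∃ i < L, ∃ c ∈ S, u = (List.replicate L x).set i c}.ncard = L * S.ncard := by
  have e : {u : List A | ∃ i < L, ∃ c ∈ S, u = (List.replicate L x).set i c} =
      (fun q : ℕ × A => (List.replicate L x).set q.1 q.2) '' (Set.Iio L ×ˢ S) := by
    ext u
    constructor
    · rintro ⟨i, hi, c, hc, rfl⟩
      exact ⟨(i, c), ⟨hi, hc⟩, rfl⟩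
    · rintro ⟨⟨i, c⟩, ⟨hi, hc⟩, rfl⟩
      exact ⟨i, hi, c, hc, rfl⟩
  rw [e, Set.InjOn.ncard_image, Set.ncard_prod]
  · simp [Set.ncard_eq_toFinset_card']
  · rintro ⟨i, c⟩ ⟨hi, hc⟩ ⟨j, d⟩ ⟨hj, hd⟩ h
    simp only [Set.mem_Iio] at hi hj hc hd h
    have h1 := congrArg (fun l => l[i]?) h
    simp only [List.getElem?_set, List.length_replicate, List.getElem?_replicate, hi, if_true] at h1
    split_ifs at h1 with hji
    · simp_all
    · simp only [Option.some.injEq] at h1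
      exact absurd (h1 ▸ hc) hS

open Classical in
lemma cmpl_eq {A : Type*} [Finite A] (a : ℕ → A) (n : ℕ → ℕ) (hn : ∀ k, 2 ≤ n k) {L : ℕ}
    (hL : L ≤ n 0 - 1 + 1) :
    cmpl a n L = L * (Ak a 0 \ {a 0}).ncard +
      if L ≤ n 0 - 1 ∨ a 0 ∈ Ak a 1 then 1 else 0 := by
  have hx : a 0 ∉ Ak a 0 \ {a 0} := fun h => h.2 rfl
  set T : Set (List A) := {u | ∃ i < L, ∃ c ∈ Ak a 0 \ {a 0}, u = (List.replicate L (a 0)).set i c}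
    with hT
  have hTfin : T.Finite := (List.finite_length_eq A L).subset (by
    rintro u ⟨i, _, c, _, rfl⟩
    simp)
  have hrep : List.replicate L (a 0) ∉ T := by
    rintro ⟨i, hi, c, hc, h⟩
    have h1 := congrArg (fun l => l[i]?) h
    simp [hi] at h1
    exact hc.2 h1.symm
  rw [← ncard_set_replicate (a 0) _ hx L, ← hT, cmpl]
  have hset : {u | u ∈ ToeplitzLang a n ∧ u.length = L} =
      if L ≤ n 0 - 1 ∨ a 0 ∈ Ak a 1 then insert (List.replicate L (a 0)) T else T := by
    ext u
    rw [Set.mem_ofPred_eq, mem_lang_iff a n hn hL]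
    have hself : ∀ i, (List.replicate L (a 0)).set i (a 0) = List.replicate L (a 0) := by
      intro i
      simp
    have hsub : ∀ c, c ∈ Ak a 0 \ {a 0} ↔ c ∈ Ak a 1 ∧ c ≠ a 0 := by
      intro c
      rw [Set.mem_sdiff, mem_Ak_zero_iff, Set.mem_singleton_iff]
      tauto
    split_ifs with h
    · rw [Set.mem_insert_iff]
      constructor
      · rintro (⟨_, hu⟩ | ⟨i, hi, c, hc, rfl⟩)
        · exact Or.inl hu
        · by_cases hca : c = a 0
          · subst hca
            exact Or.inl (hself i)
          · exact Or.inr ⟨i, hi, c, (hsub c).2 ⟨hc, hca⟩, rfl⟩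
      · rintro (rfl | ⟨i, hi, c, hc, rfl⟩)
        · by_cases hLm : L ≤ n 0 - 1
          · exact Or.inl ⟨hLm, rfl⟩
          · exact Or.inr ⟨0, by omega, a 0, h.resolve_left hLm, (hself 0).symm⟩
        · exact Or.inr ⟨i, hi, c, ((hsub c).1 hc).1, rfl⟩
    · push Not at h
      constructor
      · rintro (⟨hLm, _⟩ | ⟨i, hi, c, hc, rfl⟩)
        · omega
        · exact ⟨i, hi, c, (hsub c).2 ⟨hc, fun hca => h.2 (hca ▸ hc)⟩, rfl⟩
      · rintro ⟨i, hi, c, hc, rfl⟩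
        exact Or.inr ⟨i, hi, c, ((hsub c).1 hc).1, rfl⟩
  rw [hset]
  split_ifs
  · exact Set.ncard_insert_of_notMem hrep hTfin
  · rfl

/- STATEMENT 7: the first values of the complexity function. -/
open Classical in
theorem stmt7 {A : Type*} [Fintype A] [Nonempty A]
    (a : ℕ → A) (n : ℕ → ℕ) (hn : ∀ k, 2 ≤ n k) (ha : ∀ k, a k ≠ a (k + 1))
    (hAev : 2 ≤ (Aev a).ncard) :
    (∀ L : ℕ, L ≤ (ToeplitzBlock a n 0).length →
      (cmpl a n L : ℤ) = (((Ak a 0).ncard : ℤ) - 1) * (L : ℤ) + 1) ∧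
    (cmpl a n ((ToeplitzBlock a n 0).length + 1) : ℤ) =
      (((Ak a 0).ncard : ℤ) - 1) * (((ToeplitzBlock a n 0).length : ℤ) + 1) +
        (if a 0 ∈ Ak a 1 then 1 else 0) := by
  have hlen : (ToeplitzBlock a n 0).length = n 0 - 1 := by simp [ToeplitzBlock]
  have hcard : ((Ak a 0 \ {a 0}).ncard : ℤ) = ((Ak a 0).ncard : ℤ) - 1 := by
    have := Set.ncard_sdiff_singleton_add_one (s := Ak a 0) (a := a 0) ⟨0, le_rfl, rfl⟩
    omega
  rw [hlen]
  refine ⟨fun L hL => ?_, ?_⟩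
  · rw [cmpl_eq a n hn (by omega), if_pos (Or.inl hL)]
    push_cast
    rw [hcard]
    ring
  · rw [cmpl_eq a n hn le_rfl]
    simp only [Nat.not_succ_le_self, false_or]
    push_cast
    rw [hcard]
    ring
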